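/- Let W : Ω → ℝ^{d_w} be a measurable random variable on a probability space (Ω, P), let D ⊆ ℝ^{d_w} be a closed set with P {W ∈ D} = 1 such that every open set U ⊆ ℝ^{d_w} with U ∩ D nonempty satisfies P {W ∈ U} > 0, and let h : ℝ^{d_w} → ℝ be continuous. Then for every w ∈ D and every ε > 0 there exists a risk level α ∈ (0,1) such that VaR_α(h(W)) ≤ h(w) + ε. -/

import Mathlib

open MeasureTheory Set

/-- Value-at-risk of a real random variable `X` at level `α`. -/
noncomputable def VaR {Ω : Type*} [MeasurableSpace Ω] (P : Measure Ω)
    (X : Ω → ℝ) (α : ℝ) : ℝ :=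
  sInf {w : ℝ | ENNReal.ofReal α ≤ P {ω | X ω ≤ w}}

theorem stmt13 {Ω : Type*} [MeasurableSpace Ω] (P : Measure Ω)
    [IsProbabilityMeasure P] {dw : ℕ} (W : Ω → (Fin dw → ℝ)) (hW : Measurable W)
    (D : Set (Fin dw → ℝ)) (hD_closed : IsClosed D) (hD_prob : P {ω | W ω ∈ D} = 1)
    (hD_supp : ∀ U : Set (Fin dw → ℝ), IsOpen U → (U ∩ D).Nonempty →
      0 < P {ω | W ω ∈ U})
    (h : (Fin dw → ℝ) → ℝ) (hh : Continuous h) :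
    ∀ w ∈ D, ∀ ε : ℝ, 0 < ε → ∃ α ∈ Set.Ioo (0 : ℝ) 1,
      VaR P (fun ω => h (W ω)) α ≤ h w + ε := by
  intro w hw ε hε
  have hX : Measurable (fun ω => h (W ω)) := hh.measurable.comp hW
  have hpos : 0 < P {ω | W ω ∈ h ⁻¹' (Iio (h w + ε))} :=
    hD_supp _ (isOpen_Iio.preimage hh) ⟨w, by simp [hε], hw⟩
  have hle : P {ω | W ω ∈ h ⁻¹' (Iio (h w + ε))} ≤ P {ω | h (W ω) ≤ h w + ε} :=
    measure_mono fun ω (hω : h (W ω) < h w + ε) => (show h (W ω) ≤ h w + ε from hω.le)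
  have hp : 0 < P.real {ω | h (W ω) ≤ h w + ε} :=
    ENNReal.toReal_pos (hpos.trans_le hle).ne' (measure_ne_top _ _)
  have hp1 : P.real {ω | h (W ω) ≤ h w + ε} ≤ 1 := measureReal_le_one
  refine ⟨P.real {ω | h (W ω) ≤ h w + ε} / 2, ⟨by linarith, by linarith⟩, ?_⟩
  have key : ∀ a x : ℝ, ENNReal.ofReal a ≤ P {ω | h (W ω) ≤ x} ↔
      a ≤ P.real {ω | h (W ω) ≤ x} := fun a x =>
    ENNReal.ofReal_le_iff_le_toReal (measure_ne_top _ _)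
  unfold VaR
  refine csInf_le ?_ ?_
  · haveI : IsProbabilityMeasure (P.map (fun ω => h (W ω))) :=
      Measure.isProbabilityMeasure_map hX.aemeasurable
    have ht := ProbabilityTheory.tendsto_cdf_atBot (P.map (fun ω => h (W ω)))
    obtain ⟨x0, hx0⟩ := (ht.eventually (gt_mem_nhds (half_pos hp))).exists
    refine ⟨x0, fun y hy => ?_⟩
    by_contra hlt
    have hy2 := (key _ _).1 hy
    rw [ProbabilityTheory.cdf_eq_real, map_measureReal_apply hX measurableSet_Iic] at hx0
    have hm : P.real {ω | h (W ω) ≤ y} ≤ P.real ((fun ω => h (W ω)) ⁻¹' Iic x0) :=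
      measureReal_mono fun ω hω => le_trans hω (not_le.1 hlt).le
    linarith
  · exact (key _ _).2 (by linarith)
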